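/- Let (H, x, Y) be an sl2-triple in a finite-dimensional Lie algebra g over a field k of characteristic zero. Let 𝔳 be the supremum of the subspaces g_i over all integers i ≥ 2. Then the commutator subspace ⁅𝔳, 𝔳⁆ (the k-span of all brackets ⁅a, b⁆ with a, b ∈ 𝔳) equals the supremum of the subspaces g_i over all integers i ≥ 4. -/

import Mathlib

/-- The `i`-eigenspace of `ad H` on a Lie algebra `g`:
`g_i = {z ∈ g | ⁅H, z⁆ = (i : k) • z}`. -/
def gwt (k : Type*) [Field k] {g : Type*} [LieRing g] [LieAlgebra k g]
    (H : g) (i : ℤ) : Submodule k g where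
  carrier := {z | ⁅H, z⁆ = (i : k) • z}
  add_mem' := by
    intro a b ha hb
    simp only [Set.mem_setOf_eq] at *
    rw [lie_add, ha, hb, smul_add]
  zero_mem' := by simp
  smul_mem' := by
    intro c a ha
    simp only [Set.mem_setOf_eq] at *
    rw [lie_smul, ha]
    exact smul_comm c ((i : k)) a

/-- The sum `⨆ {i ≥ n} g_i` of the eigenspaces of `ad H` with eigenvalue at least `n`. -/
def vsp (k : Type*) [Field k] {g : Type*} [LieRing g] [LieAlgebra k g]
    (H : g) (n : ℤ) : Submodule k g :=
  ⨆ i : ℤ, ⨆ _ : n ≤ i, gwt k H i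

/-- The commutator subspace `⁅V, V⁆`: the `k`-span of all brackets of pairs of
elements of `V`. -/
def brkt (k : Type*) [Field k] {g : Type*} [LieRing g] [LieAlgebra k g]
    (V : Submodule k g) : Submodule k g :=
  Submodule.span k {w : g | ∃ a ∈ V, ∃ b ∈ V, w = ⁅a, b⁆}

/-!
For `i ≥ 1` the map `ad x : g_{i-2} → g_i` is surjective, so for `i ≥ 4` every element of `g_i` is a
bracket `⁅x, u⁆` with `x ∈ g_2` and `u ∈ g_{i-2}`, both in `𝔳`. The surjectivity is a statement
about any representation: on the `μ`-eigenspace of `h`,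
`e ^ (n + 1) f = f e ^ (n + 1) + (n + 1) (μ + n) e ^ n`, so if `e ^ (n + 1)` kills `m` then `e ^ n`
kills `m` minus a multiple of `e (f m)`. Iterating ends in finite dimension, where `e` acts
nilpotently since it shifts the finitely many eigenvalues of `h`.
-/

open LieModule Module.End

section Representation

variable {R L M : Type*} [CommRing R] [LieRing L] [LieAlgebra R L]
  [AddCommGroup M] [Module R M] [LieRingModule L M] [LieModule R L M]
  {h e f a : L} {α μ : R} {m : M}

lemma lie_mem_eigenspace_toEnd (ha : ⁅h, a⁆ = α • a) (hm : m ∈ (toEnd R L M h).eigenspace μ) :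
    ⁅a, m⁆ ∈ (toEnd R L M h).eigenspace (α + μ) := by
  rw [mem_eigenspace_iff, toEnd_apply_apply] at hm ⊢
  rw [leibniz_lie, ha, hm, smul_lie, lie_smul, add_smul]

lemma toEnd_pow_succ_apply (n : ℕ) (a : L) (m : M) :
    (toEnd R L M a ^ (n + 1)) m = ⁅a, (toEnd R L M a ^ n) m⁆ := by
  rw [pow_succ', Module.End.mul_apply, toEnd_apply_apply]

lemma toEnd_pow_mem_eigenspace_toEnd (ha : ⁅h, a⁆ = α • a)
    (hm : m ∈ (toEnd R L M h).eigenspace μ) (n : ℕ) :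
    (toEnd R L M a ^ n) m ∈ (toEnd R L M h).eigenspace (n * α + μ) := by
  induction n with
  | zero => simpa using hm
  | succ n ih =>
    rw [toEnd_pow_succ_apply]
    convert lie_mem_eigenspace_toEnd ha ih using 2
    push_cast
    ring

lemma toEnd_pow_succ_lie (hhe : ⁅h, e⁆ = (2 : R) • e) (hef : ⁅e, f⁆ = h)
    (hm : m ∈ (toEnd R L M h).eigenspace μ) (n : ℕ) :
    (toEnd R L M e ^ (n + 1)) ⁅f, m⁆ =
      ⁅f, (toEnd R L M e ^ (n + 1)) m⁆ + ((n + 1) * (μ + n)) • (toEnd R L M e ^ n) m := by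
  have lie_h_pow (n : ℕ) :
      ⁅h, (toEnd R L M e ^ n) m⁆ = (n * 2 + μ) • (toEnd R L M e ^ n) m :=
    mem_eigenspace_iff.mp (toEnd_pow_mem_eigenspace_toEnd hhe hm n)
  have lie_e_lie_f (v : M) : ⁅e, ⁅f, v⁆⁆ = ⁅h, v⁆ + ⁅f, ⁅e, v⁆⁆ := by rw [leibniz_lie, hef]
  induction n with
  | zero =>
    have hhm : ⁅h, m⁆ = μ • m := mem_eigenspace_iff.mp hm
    simp [lie_e_lie_f, hhm, add_comm]
  | succ n ih =>
    rw [toEnd_pow_succ_apply (n + 1), ih, lie_add, lie_smul, lie_e_lie_f, lie_h_pow,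
      ← toEnd_pow_succ_apply, ← toEnd_pow_succ_apply]
    push_cast
    module

lemma exists_toEnd_pow_apply_eq_zero [IsDomain R] [CharZero R] [Module.IsTorsionFree R M]
    [Module.Finite R M] (ha : ⁅h, a⁆ = α • a) (hα : α ≠ 0)
    (hm : m ∈ (toEnd R L M h).eigenspace μ) :
    ∃ n : ℕ, (toEnd R L M a ^ n) m = 0 := by
  by_contra! hne
  have hasEigenvalue (n : ℕ) : (toEnd R L M h).HasEigenvalue (n * α + μ) :=
    hasEigenvalue_of_hasEigenvector ⟨toEnd_pow_mem_eigenspace_toEnd ha hm n, hne n⟩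
  have injective : Function.Injective fun n : ℕ ↦ n * α + μ := fun i j hij ↦ by
    simpa [hα] using hij
  exact Set.infinite_of_injective_forall_mem injective hasEigenvalue
    (finite_hasEigenvalue (toEnd R L M h))

end Representation

section Surjectivity

variable {k L M : Type*} [Field k] [CharZero k] [LieRing L] [LieAlgebra k L]
  [AddCommGroup M] [Module k M] [LieRingModule L M] [LieModule k L M]
  {h e f : L} {μ : k}

lemma exists_lie_eq_of_toEnd_pow_apply_eq_zero (hhe : ⁅h, e⁆ = (2 : k) • e)
    (hhf : ⁅h, f⁆ = (-2 : k) • f) (hef : ⁅e, f⁆ = h) (hμ : ∀ n : ℕ, μ + n ≠ 0)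
    {n : ℕ} {m : M} (hm : m ∈ (toEnd k L M h).eigenspace μ) (hn : (toEnd k L M e ^ n) m = 0) :
    ∃ u ∈ (toEnd k L M h).eigenspace (-2 + μ), ⁅e, u⁆ = m := by
  induction n generalizing m with
  | zero => exact ⟨0, zero_mem _, by simpa using hn.symm⟩
  | succ n ih =>
    set c : k := (n + 1) * (μ + n)
    have hc : c ≠ 0 := mul_ne_zero (Nat.cast_add_one_ne_zero n) (hμ n)
    have hfm : ⁅f, m⁆ ∈ (toEnd k L M h).eigenspace (-2 + μ) := lie_mem_eigenspace_toEnd hhf hm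
    have hefm : ⁅e, ⁅f, m⁆⁆ ∈ (toEnd k L M h).eigenspace μ := by
      simpa using lie_mem_eigenspace_toEnd hhe hfm
    have pow_lie_lie : (toEnd k L M e ^ n) ⁅e, ⁅f, m⁆⁆ = c • (toEnd k L M e ^ n) m := by
      rw [← toEnd_apply_apply k L M e, ← Module.End.mul_apply, ← pow_succ,
        toEnd_pow_succ_lie hhe hef hm, hn, lie_zero, zero_add]
    have pow_sub : (toEnd k L M e ^ n) (m - c⁻¹ • ⁅e, ⁅f, m⁆⁆) = 0 := by
      rw [map_sub, map_smul, pow_lie_lie, inv_smul_smul₀ hc, sub_self]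
    obtain ⟨u, hu, heu⟩ := ih (sub_mem hm (Submodule.smul_mem _ _ hefm)) pow_sub
    refine ⟨u + c⁻¹ • ⁅f, m⁆, add_mem hu (Submodule.smul_mem _ _ hfm), ?_⟩
    rw [lie_add, heu, lie_smul, sub_add_cancel]

lemma eigenspace_toEnd_le_map_toEnd [FiniteDimensional k M] (hhe : ⁅h, e⁆ = (2 : k) • e)
    (hhf : ⁅h, f⁆ = (-2 : k) • f) (hef : ⁅e, f⁆ = h) (hμ : ∀ n : ℕ, μ + n ≠ 0) :
    (toEnd k L M h).eigenspace μ ≤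
      ((toEnd k L M h).eigenspace (-2 + μ)).map (toEnd k L M e) := fun _ hm ↦
  have ⟨_, hn⟩ := exists_toEnd_pow_apply_eq_zero hhe two_ne_zero hm
  exists_lie_eq_of_toEnd_pow_apply_eq_zero hhe hhf hef hμ hm hn

end Surjectivity

section Grading

variable {k g : Type*} [Field k] [LieRing g] [LieAlgebra k g] {H : g}

lemma gwt_eq_eigenspace (i : ℤ) : gwt k H i = (toEnd k g g H).eigenspace (i : k) := by
  ext z
  rw [mem_eigenspace_iff]
  rfl

lemma lie_mem_gwt {i j : ℤ} {a b : g} (ha : a ∈ gwt k H i) (hb : b ∈ gwt k H j) :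
    ⁅a, b⁆ ∈ gwt k H (i + j) := by
  rw [gwt_eq_eigenspace] at hb ⊢
  rw [Int.cast_add]
  exact lie_mem_eigenspace_toEnd ha hb

lemma gwt_le_vsp {n i : ℤ} (hni : n ≤ i) : gwt k H i ≤ vsp k H n :=
  le_iSup₂ (f := fun (i : ℤ) (_ : n ≤ i) ↦ gwt k H i) i hni

lemma brkt_eq_map₂ (V : Submodule k g) :
    brkt k V = Submodule.map₂ (toEnd k g g : g →ₗ[k] g →ₗ[k] g) V V := by
  rw [Submodule.map₂_eq_span_image2, brkt]
  congr 1
  ext w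
  simp [Set.mem_image2, eq_comm]

lemma brkt_vsp_le (n : ℤ) : brkt k (vsp k H n) ≤ vsp k H (n + n) := by
  simp only [brkt_eq_map₂, vsp, Submodule.map₂_iSup_left, Submodule.map₂_iSup_right, iSup_le_iff,
    Submodule.map₂_le]
  intro j hj i hi a ha b hb
  exact gwt_le_vsp (add_le_add hi hj) (lie_mem_gwt ha hb)

lemma gwt_le_map_toEnd [CharZero k] [FiniteDimensional k g] {x Y : g}
    (hHx : ⁅H, x⁆ = (2 : k) • x) (hHY : ⁅H, Y⁆ = (-2 : k) • Y) (hxY : ⁅x, Y⁆ = H)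
    {i : ℤ} (hi : 0 < i) :
    gwt k H i ≤ (gwt k H (-2 + i)).map (toEnd k g g x) := by
  have hμ (n : ℕ) : (i : k) + n ≠ 0 := by
    have : i + n ≠ 0 := by positivity
    exact_mod_cast this
  simpa [gwt_eq_eigenspace] using eigenspace_toEnd_le_map_toEnd (M := g) hHx hHY hxY hμ

end Grading

/-- With `𝔳 = ⨆ {i ≥ 2} g_i`, the commutator subspace `⁅𝔳, 𝔳⁆` equals
`⨆ {i ≥ 4} g_i`. -/
theorem stmt6 {k : Type*} [Field k] [CharZero k]
    {g : Type*} [LieRing g] [LieAlgebra k g] [FiniteDimensional k g]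
    (H x Y : g) (hHx : ⁅H, x⁆ = (2 : k) • x) (hHY : ⁅H, Y⁆ = (-2 : k) • Y)
    (hxY : ⁅x, Y⁆ = H) :
    brkt k (vsp k H 2) = vsp k H 4 := by
  apply le_antisymm
  · exact brkt_vsp_le 2
  · refine iSup₂_le fun i hi w hw ↦ ?_
    obtain ⟨u, hu, rfl⟩ := gwt_le_map_toEnd hHx hHY hxY (by lia) hw
    have hx : x ∈ gwt k H 2 := by simpa [gwt_eq_eigenspace] using hHx
    exact Submodule.subset_span ⟨x, gwt_le_vsp le_rfl hx, u, gwt_le_vsp (by lia) hu, rfl⟩
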